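/- Let w ≥ 1 and let λ be a partition of w with at most n parts. For j ≥ 0 let λ^j = p^j·λ be the partition obtained by multiplying every part of λ by p^j. Then the unique polynomial ψ_{λ^j} ∈ ℤ[X_1,…,X_n] with m_{λ^j} = ψ_{λ^j}(e_1,…,e_n) lies in the subring R_j. -/

import Mathlib

/-!
Write `E : ℤ[X₁,…,Xₙ] → ℤ[x₁,…,xₙ]` for evaluation at `e₁,…,eₙ`; it is injective with image the
symmetric polynomials. Let `φ` be the substitution `xᵢ ↦ xᵢ ^ p`, so `m_{λ^j} = φ^j (m_λ)`
(`msymmM_map_mul`). Since `φ` preserves symmetric polynomials, it corresponds through `E` to an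
endomorphism `θ` of `ℤ[X₁,…,Xₙ]`, and since `φ f ≡ f ^ p` modulo `p`, also `θ f ≡ f ^ p` modulo `p`
(`exists_transfer_zero`). The claim becomes `θ^j f ∈ R_j` for every `f`.

In any commutative ring consider the subrings `W_0 = ⊤` and `W_{k+1}` generated by all `h ^ p` and
`p * h` with `h ∈ W_k` (`powTower`). The congruence for `θ` gives `θ W_0 ⊆ W_1`, and then
`θ W_k ⊆ W_{k+1}` for all `k` by induction (`exists_transfer`), as `θ` is a ring homomorphism.
So `θ^j f ∈ W_j`.

Finally `W_k ⊆ R_k` (`powTower_le`), because `R_k` is a subring and `h ∈ R_k` implies both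
`p * h ∈ R_{k+1}` and `h ^ p ∈ R_{k+1}`. For the last point, `(x + y) ^ p ≡ x ^ p + y ^ p` modulo
`p R_k ⊆ R_{k+1}` reduces the claim to a single summand `p ^ (k - i) * g (X ^ (p ^ i))`, where
`g ^ p ≡ g (X ^ p)` modulo `p` suffices (`gen_pow_mem`).
-/

open scoped Classical

/-- The subring `R_k = ℤ[X₁^{p^k},…,Xₙ^{p^k}] + p·ℤ[X₁^{p^{k-1}},…,Xₙ^{p^{k-1}}] + ⋯ +
p^k·ℤ[X₁,…,Xₙ]` of `ℤ[X₁,…,Xₙ]`, viewed as a set. -/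
def Rset (p n k : ℕ) : Set (MvPolynomial (Fin n) ℤ) :=
  { F | ∃ g : ℕ → MvPolynomial (Fin n) ℤ,
      F = ∑ i ∈ Finset.range (k + 1),
        (p : MvPolynomial (Fin n) ℤ) ^ (k - i) *
          MvPolynomial.aeval (fun j => MvPolynomial.X j ^ p ^ i) (g i) }

/-- The monomial symmetric polynomial in `n` variables associated to the partition
(multiset of positive integers) `μ`: the sum of all distinct monomials whose multiset of
nonzero exponents equals `μ`. -/
noncomputable def msymmM (n : ℕ) (R : Type) [CommSemiring R] (μ : Multiset ℕ) :
    MvPolynomial (Fin n) R :=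
  ∑ d : Fin n → Fin (μ.sum + 1),
    if (Multiset.map (fun i => (d i : ℕ)) Finset.univ.val).filter (· ≠ 0) = μ then
      MvPolynomial.monomial (Finsupp.equivFunOnFinite.symm fun i => (d i : ℕ)) (1 : R)
    else 0

open MvPolynomial

/-- Frobenius congruence: `f (X ^ p) ≡ f ^ p` modulo `p`. -/
lemma exists_expand_eq {p : ℕ} (hp : p.Prime) {n : ℕ} (f : MvPolynomial (Fin n) ℤ) :
    ∃ q, expand p f = f ^ p + p * q := by
  have : Fact p.Prime := ⟨hp⟩
  have h : C (p : ℤ) ∣ expand p f - f ^ p := by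
    rw [C_dvd_iff_zmod, map_sub, map_expand, expand_zmod, map_pow, sub_self]
  obtain ⟨q, hq⟩ := h
  refine ⟨q, ?_⟩
  have : (C (p : ℤ) : MvPolynomial (Fin n) ℤ) = p := by simp
  rw [← this, ← hq]
  ring

/-! ### The subring `R_k` -/

lemma mem_Rset_iff {p n k : ℕ} {F : MvPolynomial (Fin n) ℤ} :
    F ∈ Rset p n k ↔ ∃ g : ℕ → MvPolynomial (Fin n) ℤ,
      F = ∑ i ∈ Finset.range (k + 1), (p : MvPolynomial (Fin n) ℤ) ^ (k - i) *
        expand (p ^ i) (g i) := Iff.rfl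

lemma Rset_zero (p n k : ℕ) : (0 : MvPolynomial (Fin n) ℤ) ∈ Rset p n k :=
  mem_Rset_iff.2 ⟨0, by simp⟩

lemma Rset_add {p n k : ℕ} {F G : MvPolynomial (Fin n) ℤ} (hF : F ∈ Rset p n k)
    (hG : G ∈ Rset p n k) : F + G ∈ Rset p n k := by
  obtain ⟨f, rfl⟩ := mem_Rset_iff.1 hF
  obtain ⟨g, rfl⟩ := mem_Rset_iff.1 hG
  exact mem_Rset_iff.2 ⟨f + g, by simp [mul_add, Finset.sum_add_distrib]⟩

lemma Rset_neg {p n k : ℕ} {F : MvPolynomial (Fin n) ℤ} (hF : F ∈ Rset p n k) :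
    -F ∈ Rset p n k := by
  obtain ⟨f, rfl⟩ := mem_Rset_iff.1 hF
  exact mem_Rset_iff.2 ⟨-f, by simp⟩

/-- The exponent `a` of `p` may exceed `k - i`, the excess being absorbed into `f`. -/
lemma Rset_gen {p n k i a : ℕ} (hi : i ≤ k) (ha : k ≤ a + i) (f : MvPolynomial (Fin n) ℤ) :
    (p : MvPolynomial (Fin n) ℤ) ^ a * expand (p ^ i) f ∈ Rset p n k := by
  refine mem_Rset_iff.2
    ⟨Pi.single i ((p : MvPolynomial (Fin n) ℤ) ^ (a - (k - i)) * f), ?_⟩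
  rw [Finset.sum_eq_single i]
  · rw [Pi.single_eq_same, map_mul, map_pow, map_natCast, ← mul_assoc, ← pow_add]
    congr 2
    omega
  · intro b _ hb
    simp [hb]
  · intro h
    exact absurd (Finset.mem_range.2 (by omega)) h

lemma Rset_sum {p n k : ℕ} {ι : Type} (s : Finset ι) (f : ι → MvPolynomial (Fin n) ℤ)
    (h : ∀ i ∈ s, f i ∈ Rset p n k) : ∑ i ∈ s, f i ∈ Rset p n k :=
  Finset.sum_induction f (· ∈ Rset p n k) (fun _ _ => Rset_add) (Rset_zero p n k) h

lemma Rset_mul_gen {p n k i j : ℕ} (hij : i ≤ j) (hj : j ≤ k) (f g : MvPolynomial (Fin n) ℤ) :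
    ((p : MvPolynomial (Fin n) ℤ) ^ (k - i) * expand (p ^ i) f) *
      ((p : MvPolynomial (Fin n) ℤ) ^ (k - j) * expand (p ^ j) g) ∈ Rset p n k := by
  have h := Rset_gen (p := p) (k := k) (i := i) (a := (k - i) + (k - j)) (by omega) (by omega)
    (f * expand (p ^ (j - i)) g)
  convert h using 1
  rw [map_mul, ← expand_mul, ← pow_add, Nat.add_sub_cancel' hij, pow_add]
  ring

lemma Rset_mul {p n k : ℕ} {F G : MvPolynomial (Fin n) ℤ} (hF : F ∈ Rset p n k)
    (hG : G ∈ Rset p n k) : F * G ∈ Rset p n k := by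
  obtain ⟨f, rfl⟩ := mem_Rset_iff.1 hF
  obtain ⟨g, rfl⟩ := mem_Rset_iff.1 hG
  rw [Finset.sum_mul_sum]
  refine Rset_sum _ _ fun i hi => Rset_sum _ _ fun j hj => ?_
  rw [Finset.mem_range] at hi hj
  rcases le_total i j with h | h
  · exact Rset_mul_gen h (by omega) _ _
  · rw [mul_comm]
    exact Rset_mul_gen h (by omega) _ _

/-- `R_k` as a bundled subring. -/
def Rring (p n k : ℕ) : Subring (MvPolynomial (Fin n) ℤ) where
  carrier := Rset p n k
  mul_mem' := Rset_mul
  one_mem' := by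
    have h := Rset_gen (p := p) (n := n) (k := k) (i := k) (a := 0) le_rfl (by omega) 1
    simpa using h
  add_mem' := Rset_add
  zero_mem' := Rset_zero p n k
  neg_mem' := Rset_neg

lemma mem_Rring {p n k : ℕ} {F : MvPolynomial (Fin n) ℤ} : F ∈ Rring p n k ↔ F ∈ Rset p n k :=
  Iff.rfl

lemma natCast_mul_mem_Rring {p n k : ℕ} {F : MvPolynomial (Fin n) ℤ} (hF : F ∈ Rring p n k) :
    (p : MvPolynomial (Fin n) ℤ) * F ∈ Rring p n (k + 1) := by
  obtain ⟨f, rfl⟩ := mem_Rset_iff.1 hF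
  rw [Finset.mul_sum]
  refine Subring.sum_mem _ fun i hi => ?_
  rw [Finset.mem_range] at hi
  rw [← mul_assoc, ← pow_succ']
  exact Rset_gen (by omega) (by omega) _

/-- The case of a single summand of `R_k` in `h ∈ R_k → h ^ p ∈ R_{k+1}`. -/
lemma gen_pow_mem {p : ℕ} (hp : p.Prime) {n k i : ℕ} (hi : i ≤ k) (g : MvPolynomial (Fin n) ℤ) :
    ((p : MvPolynomial (Fin n) ℤ) ^ (k - i) * expand (p ^ i) g) ^ p ∈ Rring p n (k + 1) := by
  obtain ⟨q, hq⟩ := exists_expand_eq hp g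
  have hg : g ^ p = expand p g - p * q := by rw [hq]; ring
  have hle : k - i ≤ (k - i) * p := Nat.le_mul_of_pos_right _ hp.pos
  have e : ((p : MvPolynomial (Fin n) ℤ) ^ (k - i) * expand (p ^ i) g) ^ p =
      (p : MvPolynomial (Fin n) ℤ) ^ ((k - i) * p) * expand (p ^ (i + 1)) g -
      (p : MvPolynomial (Fin n) ℤ) ^ ((k - i) * p + 1) * expand (p ^ i) q := by
    rw [mul_pow, ← map_pow, hg, map_sub, map_mul, map_natCast, ← expand_mul, ← pow_mul,
      ← pow_succ p i]
    ring
  rw [e]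
  exact Subring.sub_mem _ (Rset_gen (by omega) (by omega) _) (Rset_gen (by omega) (by omega) _)

lemma add_pow_mem {p : ℕ} (hp : p.Prime) {n k : ℕ} {x y : MvPolynomial (Fin n) ℤ}
    (hx : x ∈ Rring p n k) (hy : y ∈ Rring p n k) (hx' : x ^ p ∈ Rring p n (k + 1))
    (hy' : y ^ p ∈ Rring p n (k + 1)) : (x + y) ^ p ∈ Rring p n (k + 1) := by
  -- Working inside the subring `R_k` puts the remainder `r` in `R_k` as well.
  obtain ⟨r, hr⟩ := exists_add_pow_prime_eq hp (⟨x, hx⟩ : Rring p n k) ⟨y, hy⟩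
  have h := congrArg Subtype.val hr
  have h' : (x + y) ^ p = x ^ p + y ^ p + p * (x * y * r.1) := by
    rw [← mul_assoc, ← mul_assoc]
    simpa using h
  rw [h']
  exact Subring.add_mem _ (Subring.add_mem _ hx' hy')
    (natCast_mul_mem_Rring (Subring.mul_mem _ (Subring.mul_mem _ hx hy) r.2))

lemma pow_mem_Rring {p : ℕ} (hp : p.Prime) {n k : ℕ} {F : MvPolynomial (Fin n) ℤ}
    (hF : F ∈ Rring p n k) : F ^ p ∈ Rring p n (k + 1) := by
  obtain ⟨f, rfl⟩ := mem_Rset_iff.1 hF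
  refine (Finset.sum_induction _ (fun x => x ∈ Rring p n k ∧ x ^ p ∈ Rring p n (k + 1))
    ?_ ?_ ?_).2
  · rintro a b ⟨ha, ha'⟩ ⟨hb, hb'⟩
    exact ⟨Subring.add_mem _ ha hb, add_pow_mem hp ha hb ha' hb'⟩
  · rw [zero_pow hp.ne_zero]
    exact ⟨Subring.zero_mem _, Subring.zero_mem _⟩
  · intro i hi
    rw [Finset.mem_range] at hi
    exact ⟨Rset_gen (by omega) (by omega) _, gen_pow_mem hp (by omega) _⟩

/-! ### The tower generated by `p`-th powers and multiples of `p` -/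

/-- The subrings `W_0 = ⊤` and `W_{k+1} = ⟨h ^ p, p * h : h ∈ W_k⟩`. -/
def powTower (A : Type) [CommRing A] (p : ℕ) : ℕ → Subring A
  | 0 => ⊤
  | k + 1 => Subring.closure {x | ∃ h ∈ powTower A p k, x = h ^ p ∨ x = p * h}

lemma powTower_le {p : ℕ} (hp : p.Prime) (n k : ℕ) :
    powTower (MvPolynomial (Fin n) ℤ) p k ≤ Rring p n k := by
  induction k with
  | zero =>
    intro F _
    have h := Rset_gen (p := p) (n := n) (k := 0) (i := 0) (a := 0) le_rfl (by omega) F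
    simpa [mem_Rring] using h
  | succ k ih =>
    rw [powTower, Subring.closure_le]
    rintro x ⟨h, hh, rfl | rfl⟩
    · exact pow_mem_Rring hp (ih hh)
    · exact natCast_mul_mem_Rring (ih hh)

/-! ### Transfer of the substitution `xᵢ ↦ xᵢ ^ p` along the elementary symmetric polynomials -/

/-- Evaluation at the elementary symmetric polynomials `e₁,…,eₙ`. -/
noncomputable def evalE (n : ℕ) : MvPolynomial (Fin n) ℤ →ₐ[ℤ] MvPolynomial (Fin n) ℤ :=
  aeval (fun i : Fin n => esymm (Fin n) ℤ ((i : ℕ) + 1))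

lemma evalE_eq (n : ℕ) (f : MvPolynomial (Fin n) ℤ) :
    evalE n f = (esymmAlgHom (Fin n) ℤ n f).val := (esymmAlgHom_apply f).symm

lemma evalE_injective (n : ℕ) : Function.Injective (evalE n) := by
  intro a b h
  rw [evalE_eq, evalE_eq] at h
  exact (esymmAlgHom_fin_bijective ℤ n).1 (Subtype.ext h)

lemma evalE_isSymmetric (n : ℕ) (f : MvPolynomial (Fin n) ℤ) : (evalE n f).IsSymmetric := by
  rw [evalE_eq]
  exact (esymmAlgHom (Fin n) ℤ n f).2

lemma exists_evalE {n : ℕ} {F : MvPolynomial (Fin n) ℤ} (hF : F.IsSymmetric) :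
    ∃ f, evalE n f = F := by
  obtain ⟨f, hf⟩ := (esymmAlgHom_fin_bijective ℤ n).2 ⟨F, hF⟩
  exact ⟨f, by rw [evalE_eq, hf]⟩

/-- The endomorphism transferred from `xᵢ ↦ xᵢ ^ p` is congruent to `f ↦ f ^ p` modulo `p`. -/
lemma exists_transfer_zero {p : ℕ} (hp : p.Prime) {n : ℕ} (f : MvPolynomial (Fin n) ℤ) :
    ∃ r, evalE n (f ^ p + p * r) = expand p (evalE n f) := by
  obtain ⟨q, hq⟩ := exists_expand_eq hp (evalE n f)
  have hp0 : (p : MvPolynomial (Fin n) ℤ) ≠ 0 := Nat.cast_ne_zero.2 hp.ne_zero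
  have hs : q.IsSymmetric := by
    intro e
    have hE := evalE_isSymmetric n f e
    have h := congrArg (rename e) hq
    rw [rename_expand, hE, map_add, map_pow, hE, map_mul, map_natCast, hq] at h
    exact (mul_left_cancel₀ hp0 (add_left_cancel h)).symm
  obtain ⟨r, rfl⟩ := exists_evalE hs
  exact ⟨r, by rw [hq, map_add, map_pow, map_mul, map_natCast]⟩

lemma exists_transfer {p : ℕ} (hp : p.Prime) {n : ℕ} (k : ℕ) :
    ∀ f ∈ powTower (MvPolynomial (Fin n) ℤ) p k,
      ∃ g ∈ powTower (MvPolynomial (Fin n) ℤ) p (k + 1), evalE n g = expand p (evalE n f) := by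
  induction k with
  | zero =>
    intro f _
    obtain ⟨r, hr⟩ := exists_transfer_zero hp f
    refine ⟨_, Subring.add_mem _ (Subring.subset_closure ?_) (Subring.subset_closure ?_), hr⟩
    · exact ⟨f, Subring.mem_top _, Or.inl rfl⟩
    · exact ⟨r, Subring.mem_top _, Or.inr rfl⟩
  | succ k ih =>
    intro f hf
    rw [powTower] at hf
    induction hf using Subring.closure_induction with
    | mem x hx =>
      obtain ⟨h, hh, rfl | rfl⟩ := hx
      · obtain ⟨g, hg, e⟩ := ih h hh
        exact ⟨g ^ p, Subring.subset_closure ⟨g, hg, Or.inl rfl⟩, by simp [e]⟩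
      · obtain ⟨g, hg, e⟩ := ih h hh
        exact ⟨p * g, Subring.subset_closure ⟨g, hg, Or.inr rfl⟩, by simp [e]⟩
    | zero => exact ⟨0, Subring.zero_mem _, by simp⟩
    | one => exact ⟨1, Subring.one_mem _, by simp⟩
    | add x y _ _ hx hy =>
      obtain ⟨a, ha, ea⟩ := hx
      obtain ⟨b, hb, eb⟩ := hy
      exact ⟨a + b, Subring.add_mem _ ha hb, by simp [ea, eb]⟩
    | neg x _ hx =>
      obtain ⟨a, ha, ea⟩ := hx
      exact ⟨-a, Subring.neg_mem _ ha, by simp [ea]⟩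
    | mul x y _ _ hx hy =>
      obtain ⟨a, ha, ea⟩ := hx
      obtain ⟨b, hb, eb⟩ := hy
      exact ⟨a * b, Subring.mul_mem _ ha hb, by simp [ea, eb]⟩

lemma exists_transfer_iterate {p : ℕ} (hp : p.Prime) {n : ℕ} (f : MvPolynomial (Fin n) ℤ)
    (k : ℕ) : ∃ g ∈ powTower (MvPolynomial (Fin n) ℤ) p k,
      evalE n g = expand (p ^ k) (evalE n f) := by
  induction k with
  | zero => exact ⟨f, Subring.mem_top _, by simp⟩
  | succ k ih =>
    obtain ⟨g, hg, e⟩ := ih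
    obtain ⟨g', hg', e'⟩ := exists_transfer hp k g hg
    exact ⟨g', hg', by rw [e', e, ← expand_mul, pow_succ']⟩

/-! ### Monomial symmetric polynomials -/

lemma coeff_msymmM (n : ℕ) (μ : Multiset ℕ) (d : Fin n →₀ ℕ) :
    coeff d (msymmM n ℤ μ) =
      if (Multiset.map (fun i => d i) Finset.univ.val).filter (· ≠ 0) = μ then 1 else 0 := by
  rw [msymmM, coeff_sum]
  split_ifs with h
  · -- Each exponent is a part of `μ` or zero, hence bounded by `μ.sum`.
    have hd : ∀ i, d i < μ.sum + 1 := by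
      intro i
      by_cases h0 : d i = 0
      · omega
      · refine Nat.lt_succ_of_le (Multiset.le_sum_of_mem ?_)
        rw [← h, Multiset.mem_filter]
        exact ⟨Multiset.mem_map_of_mem _ (Finset.mem_univ i), h0⟩
    rw [Finset.sum_eq_single (fun i => ⟨d i, hd i⟩)]
    · have e : (Finsupp.equivFunOnFinite.symm fun i => d i) = d := by ext; simp
      simp only [h, if_true, e, coeff_monomial]
    · intro b _ hb
      split_ifs
      · rw [coeff_monomial, if_neg]
        rintro rfl
        apply hb
        ext i
        simp
      · simp
    · simp
  · refine Finset.sum_eq_zero fun b _ => ?_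
    split_ifs with hb
    · rw [coeff_monomial, if_neg]
      rintro rfl
      exact h (by simpa using hb)
    · simp

lemma msymmM_isSymmetric (n : ℕ) (μ : Multiset ℕ) : (msymmM n ℤ μ).IsSymmetric := by
  intro e
  ext d
  obtain ⟨c, rfl⟩ : ∃ c : Fin n →₀ ℕ, d = c.mapDomain e :=
    ⟨d.mapDomain e.symm, by rw [← Finsupp.mapDomain_comp]; simp⟩
  rw [coeff_rename_mapDomain _ e.injective, coeff_msymmM, coeff_msymmM]
  have h : Multiset.map (fun i => c.mapDomain e i) Finset.univ.val =
      Multiset.map (fun i => c i) Finset.univ.val := by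
    have h1 : (Finset.univ : Finset (Fin n)).val = Multiset.map e Finset.univ.val := by simp
    conv_lhs => rw [h1]
    rw [Multiset.map_map]
    refine Multiset.map_congr rfl fun i _ => ?_
    simp
  rw [h]

lemma msymmM_map_mul (n : ℕ) {q : ℕ} (hq : q ≠ 0) (μ : Multiset ℕ) :
    msymmM n ℤ (μ.map fun i => q * i) = expand q (msymmM n ℤ μ) := by
  ext d
  by_cases hd : ∀ i, q ∣ d i
  · obtain ⟨c, rfl⟩ : ∃ c : Fin n →₀ ℕ, d = q • c := by
      choose c hc using hd
      exact ⟨Finsupp.equivFunOnFinite.symm c, by ext i; simp [hc]⟩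
    rw [coeff_expand_smul _ hq, coeff_msymmM, coeff_msymmM]
    have h : (Multiset.map (fun i => (q • c) i) Finset.univ.val).filter (· ≠ 0) =
        ((Multiset.map (fun i => c i) Finset.univ.val).filter (· ≠ 0)).map (fun i => q * i) := by
      have : (fun i => (q • c) i) = (fun i => q * i) ∘ fun i => c i := by ext; simp
      rw [this, ← Multiset.map_map, Multiset.filter_map]
      congr 1
      refine Multiset.filter_congr fun x _ => ?_
      simp [hq]
    have hinj : Function.Injective fun i : ℕ => q * i := fun a b hab =>
      Nat.eq_of_mul_eq_mul_left (Nat.pos_of_ne_zero hq) hab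
    rw [h]
    simp only [(Multiset.map_injective hinj).eq_iff]
  · push Not at hd
    obtain ⟨i, hi⟩ := hd
    rw [coeff_expand_of_not_dvd _ hi, coeff_msymmM, if_neg]
    intro h
    have hm : d i ∈ μ.map fun i => q * i := by
      rw [← h, Multiset.mem_filter]
      exact ⟨Multiset.mem_map_of_mem _ (Finset.mem_univ i), fun h0 => hi (h0 ▸ dvd_zero q)⟩
    obtain ⟨a, _, ha⟩ := Multiset.mem_map.1 hm
    exact hi ⟨a, ha.symm⟩

theorem stmt7 (p : ℕ) (hp : p.Prime) (n : ℕ) (hn : 1 ≤ n)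
    (w : ℕ) (hw : 1 ≤ w) (lam : Multiset ℕ) (hpos : ∀ i ∈ lam, 0 < i)
    (hsum : lam.sum = w) (hcard : Multiset.card lam ≤ n)
    (j : ℕ)
    -- `ψ` is the unique polynomial with `m_{λ^j} = ψ(e_1,…,e_n)`, where
    -- `λ^j = p^j·λ` is obtained by multiplying every part of `λ` by `p^j`.
    (ψ : MvPolynomial (Fin n) ℤ)
    (hψ : MvPolynomial.aeval (fun i : Fin n => MvPolynomial.esymm (Fin n) ℤ ((i : ℕ) + 1)) ψ =
      msymmM n ℤ (lam.map fun i => p ^ j * i)) :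
    ψ ∈ Rset p n j := by
  obtain ⟨f, hf⟩ := exists_evalE (msymmM_isSymmetric n lam)
  obtain ⟨g, hg, e⟩ := exists_transfer_iterate hp f j
  have h : ψ = g := evalE_injective n <| by
    rw [e, hf, ← msymmM_map_mul n (pow_ne_zero j hp.ne_zero)]
    exact hψ
  rw [h]
  exact powTower_le hp n j hg
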